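/- Let N ≥ 1 and let U ⊆ ℂ^N be open. Let g : U → Matrix (Fin N) (Fin N) ℂ have holomorphic entries, with g(p) symmetric and invertible for every p ∈ U. For holomorphic vector fields V, W : U → ℂ^N and holomorphic f : U → ℂ define (V f)(p) = fderiv f p (V(p)), the bracket [V,W](p) = fderiv W p (V(p)) − fderiv V p (W(p)), and the pairing ⟨V,W⟩(p) = (V(p))ᵀ g(p) W(p). Then there exists a unique operation D assigning to each pair of holomorphic vector fields V, W on U a holomorphic vector field D_V W on U such that: (D1) D_V W is linear over holomorphic functions in V; (D2) D_V W is ℂ-linear in W; (D3) D_V(fW) = (Vf)·W + f·D_V W for every holomorphic f : U → ℂ; (D4) [V,W] = D_V W − D_W V; (D5) X⟨V,W⟩ = ⟨D_X V, W⟩ + ⟨V, D_X W⟩ for all holomorphic vector fields X, V, W. Moreover D is characterized by Koszul's formula: 2⟨D_V W, X⟩ = V⟨W,X⟩ + W⟨X,V⟩ − X⟨V,W⟩ − ⟨V,[W,X]⟩ + ⟨W,[X,V]⟩ + ⟨X,[V,W]⟩. -/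

import Mathlib

open Matrix Set

namespace LeviCivitaChart

/-- A holomorphic vector field on `U ⊆ ℂ^N`, identified with a holomorphic map
`U → ℂ^N`. -/
def HolVF (N : ℕ) (U : Set (Fin N → ℂ)) (V : (Fin N → ℂ) → (Fin N → ℂ)) : Prop :=
  DifferentiableOn ℂ V U

/-- A holomorphic function on `U ⊆ ℂ^N`. -/
def HolFn (N : ℕ) (U : Set (Fin N → ℂ)) (f : (Fin N → ℂ) → ℂ) : Prop :=
  DifferentiableOn ℂ f U

/-- The action `(V f)(p) = df_p(V(p))` of a vector field on a function. -/
noncomputable def act (N : ℕ) (V : (Fin N → ℂ) → (Fin N → ℂ))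
    (f : (Fin N → ℂ) → ℂ) (p : Fin N → ℂ) : ℂ :=
  fderiv ℂ f p (V p)

/-- The Lie bracket `[V,W](p) = dW_p(V(p)) − dV_p(W(p))`. -/
noncomputable def bracket (N : ℕ) (V W : (Fin N → ℂ) → (Fin N → ℂ))
    (p : Fin N → ℂ) : Fin N → ℂ :=
  fderiv ℂ W p (V p) - fderiv ℂ V p (W p)

/-- The metric pairing `⟨V,W⟩(p) = V(p)ᵀ g(p) W(p)`. -/
noncomputable def pairing (N : ℕ) (g : (Fin N → ℂ) → Matrix (Fin N) (Fin N) ℂ)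
    (V W : (Fin N → ℂ) → (Fin N → ℂ)) (p : Fin N → ℂ) : ℂ :=
  V p ⬝ᵥ (g p *ᵥ W p)

/-- `D` is a Levi-Civita connexion for the metric `g` on `U`: it takes pairs of
holomorphic vector fields to holomorphic vector fields and satisfies (D1)–(D5). -/
def IsLeviCivita (N : ℕ) (U : Set (Fin N → ℂ))
    (g : (Fin N → ℂ) → Matrix (Fin N) (Fin N) ℂ)
    (D : ((Fin N → ℂ) → (Fin N → ℂ)) → ((Fin N → ℂ) → (Fin N → ℂ)) →
      ((Fin N → ℂ) → (Fin N → ℂ))) : Prop :=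
  (∀ V W, HolVF N U V → HolVF N U W → DifferentiableOn ℂ (D V W) U) ∧
  -- (D1) linearity over holomorphic functions in the first argument
  (∀ f₁ f₂ V₁ V₂ W, HolFn N U f₁ → HolFn N U f₂ →
    HolVF N U V₁ → HolVF N U V₂ → HolVF N U W →
    ∀ p ∈ U, D (fun q => f₁ q • V₁ q + f₂ q • V₂ q) W p
      = f₁ p • D V₁ W p + f₂ p • D V₂ W p) ∧
  -- (D2) ℂ-linearity in the second argument
  (∀ (a b : ℂ) V W₁ W₂, HolVF N U V → HolVF N U W₁ → HolVF N U W₂ →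
    ∀ p ∈ U, D V (fun q => a • W₁ q + b • W₂ q) p = a • D V W₁ p + b • D V W₂ p) ∧
  -- (D3) Leibniz rule
  (∀ f V W, HolFn N U f → HolVF N U V → HolVF N U W →
    ∀ p ∈ U, D V (fun q => f q • W q) p = act N V f p • W p + f p • D V W p) ∧
  -- (D4) torsion-freeness
  (∀ V W, HolVF N U V → HolVF N U W →
    ∀ p ∈ U, bracket N V W p = D V W p - D W V p) ∧
  -- (D5) metric compatibility
  (∀ X V W, HolVF N U X → HolVF N U V → HolVF N U W →
    ∀ p ∈ U, act N X (pairing N g V W) p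
      = pairing N g (D X V) W p + pairing N g V (D X W) p)

/-- A directional derivative of a holomorphic map on an open subset of a finite-dimensional complex
space is holomorphic. -/
theorem differentiableOn_fderiv_apply_const {E F : Type*}
    [NormedAddCommGroup E] [NormedSpace ℂ E] [FiniteDimensional ℂ E]
    [NormedAddCommGroup F] [NormedSpace ℂ F] [FiniteDimensional ℂ F]
    {f : E → F} {U : Set E} (hf : DifferentiableOn ℂ f U) (hU : IsOpen U) (v : E) :
    DifferentiableOn ℂ (fun x => fderiv ℂ f x v) U := by
  intro p hp
  refine DifferentiableAt.differentiableWithinAt ?_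
  borelize E
  have : CompleteSpace F := FiniteDimensional.complete ℂ F
  have : ProperSpace E := FiniteDimensional.proper ℂ E
  have : ProperSpace (E →L[ℂ] F) := FiniteDimensional.proper ℂ (E →L[ℂ] F)
  obtain ⟨δ, hδ, hball⟩ : ∃ δ > 0, Metric.ball p δ ⊆ U ∩ f ⁻¹' Metric.ball (f p) 1 :=
    Metric.mem_nhds_iff.1 <| Filter.inter_mem (hU.mem_nhds hp) <|
      (hf.differentiableAt (hU.mem_nhds hp)).continuousAt.preimage_mem_nhds
        (Metric.ball_mem_nhds _ one_pos)
  have hbU : Metric.ball p δ ⊆ U := fun y hy => (hball hy).1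
  have hdiff : ∀ y ∈ Metric.ball p δ, DifferentiableAt ℂ f y := fun y hy =>
    hf.differentiableAt (hU.mem_nhds (hbU hy))
  have hbound : ∀ y ∈ Metric.ball p (δ / 2), ‖fderiv ℂ f y‖ ≤ 2 / (δ / 2) := by
    intro y hy
    have hsub : Metric.ball y (δ / 2) ⊆ Metric.ball p δ :=
      Metric.ball_subset_ball' (by rw [Metric.mem_ball] at hy; linarith)
    refine Complex.norm_fderiv_le_div_of_mapsTo_ball (hf.mono (hsub.trans hbU)) ?_ (by positivity)
    intro z hz
    have hz' : dist (f z) (f p) < 1 := (hball (hsub hz)).2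
    have hy' : dist (f y) (f p) < 1 := (hball (hsub (Metric.mem_ball_self (by positivity)))).2
    rw [Metric.mem_closedBall]
    linarith [dist_triangle_right (f z) (f y) (f p)]
  set r : ℝ := δ / (4 * (‖v‖ + 1)) with hr
  have hr0 : 0 < r := by positivity
  have hrv : r * ‖v‖ < δ / 4 := by
    rw [hr, div_mul_eq_mul_div, div_lt_div_iff₀ (by positivity) (by positivity)]
    nlinarith
  have hmem : ∀ x ∈ Metric.ball p (δ / 4), ∀ z ∈ Metric.closedBall (0 : ℂ) r,
      x + z • v ∈ Metric.ball p (δ / 2) := by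
    intro x hx z hz
    rw [mem_ball_iff_norm] at hx ⊢
    rw [mem_closedBall_zero_iff] at hz
    calc ‖x + z • v - p‖ = ‖(x - p) + z • v‖ := by congr 1; abel
      _ ≤ ‖x - p‖ + ‖z‖ * ‖v‖ := (norm_add_le _ _).trans_eq (by rw [norm_smul])
      _ ≤ ‖x - p‖ + r * ‖v‖ := by gcongr
      _ < δ / 2 := by linarith
  have hhalf : Metric.ball p (δ / 2) ⊆ Metric.ball p δ := Metric.ball_subset_ball (by linarith)
  have hcircle : ∀ t, circleMap 0 r t ∈ Metric.closedBall (0 : ℂ) r :=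
    circleMap_mem_closedBall 0 hr0.le
  have hcauchy : ∀ x ∈ Metric.ball p (δ / 4), fderiv ℂ f x v =
      (2 * Real.pi * Complex.I : ℂ)⁻¹ • ∮ z in C(0, r), ((z - 0) ^ 2)⁻¹ • f (x + z • v) := by
    intro x hx
    have hopen : IsOpen ((fun z : ℂ => x + z • v) ⁻¹' Metric.ball p (δ / 2)) :=
      Metric.isOpen_ball.preimage (by fun_prop)
    rw [Complex.two_pi_I_inv_smul_circleIntegral_sub_sq_inv_smul_of_differentiable
      (f := fun z => f (x + z • v)) hopen (hmem x hx) ?_ (Metric.mem_ball_self hr0)]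
    · have hx0 : x + (0 : ℂ) • v ∈ Metric.ball p δ :=
        hhalf (hmem x hx 0 (Metric.mem_closedBall_self hr0.le))
      have h := (hdiff _ hx0).hasFDerivAt.comp_hasDerivAt (0 : ℂ)
        (((hasDerivAt_id (0 : ℂ)).smul_const v).const_add x)
      simpa [Function.comp_def] using h.deriv.symm
    · intro z hz
      exact ((hdiff _ (hhalf hz)).comp z (by fun_prop)).differentiableWithinAt
  refine DifferentiableAt.congr_of_eventuallyEq ?_
    (Filter.eventually_of_mem (Metric.ball_mem_nhds p (by positivity : 0 < δ / 4)) hcauchy)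
  refine DifferentiableAt.const_smul ?_ _
  simp only [circleIntegral, sub_zero]
  have hne : ∀ t, circleMap 0 r t ≠ 0 := fun t => circleMap_ne_center hr0.ne'
  set c : ℝ → ℂ := fun t => deriv (circleMap 0 r) t * ((circleMap 0 r t) ^ 2)⁻¹ with hc
  have hc_cont : Continuous c := by
    simp only [hc, deriv_circleMap]
    exact ((continuous_circleMap 0 r).mul continuous_const).mul
      (((continuous_circleMap 0 r).pow 2).inv₀ fun t => pow_ne_zero 2 (hne t))
  simp only [smul_smul]
  have hF_cont : ∀ x ∈ Metric.ball p (δ / 4),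
      Continuous fun t => c t • f (x + circleMap 0 r t • v) := by
    intro x hx
    refine hc_cont.smul (continuous_iff_continuousAt.2 fun t => ?_)
    have hft := (hdiff _ (hhalf (hmem x hx _ (hcircle t)))).continuousAt
    exact ContinuousAt.comp (f := fun t => x + circleMap 0 r t • v) hft
      (by have := continuous_circleMap 0 r; fun_prop)
  refine (intervalIntegral.hasFDerivAt_integral_of_dominated_of_fderiv_le
    (F := fun x t => c t • f (x + circleMap 0 r t • v))
    (F' := fun x t => c t • fderiv ℂ f (x + circleMap 0 r t • v))
    (s := Metric.ball p (δ / 4)) (bound := fun t => ‖c t‖ * (2 / (δ / 2)))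
    (Metric.ball_mem_nhds p (by positivity)) ?_ ?_ ?_ ?_ ?_ ?_).differentiableAt
  · filter_upwards [Metric.ball_mem_nhds p (by positivity : 0 < δ / 4)] with x hx
    exact (hF_cont x hx).aestronglyMeasurable
  · exact (hF_cont p (Metric.mem_ball_self (by positivity))).intervalIntegrable _ _
  · refine hc_cont.aestronglyMeasurable.smul (Measurable.aestronglyMeasurable ?_)
    refine (measurable_fderiv ℂ f).comp (Continuous.measurable ?_)
    have := continuous_circleMap 0 r
    fun_prop
  · refine Filter.Eventually.of_forall fun t _ x hx => ?_
    rw [norm_smul]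
    gcongr
    exact hbound _ (hmem x hx _ (hcircle t))
  · exact (hc_cont.norm.mul continuous_const).intervalIntegrable _ _
  · refine Filter.Eventually.of_forall fun t _ x hx => ?_
    have h := (hdiff _ (hhalf (hmem x hx _ (hcircle t)))).hasFDerivAt
    exact ((hasFDerivAt_comp_add_right _).2 h).const_smul (c t)

/-- The inverse of an invertible holomorphic matrix field has holomorphic entries. -/
theorem differentiableOn_matrix_inv_apply {N : ℕ} {U : Set (Fin N → ℂ)}
    {g : (Fin N → ℂ) → Matrix (Fin N) (Fin N) ℂ}
    (hg : ∀ i j, DifferentiableOn ℂ (fun p => g p i j) U) (hinv : ∀ p ∈ U, IsUnit (g p))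
    (i j : Fin N) : DifferentiableOn ℂ (fun p => (g p)⁻¹ i j) U := by
  have hdet : ∀ {A : (Fin N → ℂ) → Matrix (Fin N) (Fin N) ℂ},
      (∀ i j, DifferentiableOn ℂ (fun p => A p i j) U) →
        DifferentiableOn ℂ (fun p => (A p).det) U := by
    intro A hA
    simp only [Matrix.det_apply']
    refine DifferentiableOn.fun_sum fun σ _ => DifferentiableOn.const_mul (fun p hp => ?_) _
    exact (HasFDerivWithinAt.finsetProd (g := fun i p => A p (σ i) i) fun i _ =>
      (hA (σ i) i p hp).hasFDerivWithinAt).differentiableWithinAt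
  simp only [Matrix.inv_def, Ring.inverse_eq_inv', Matrix.smul_apply, Matrix.adjugate_apply,
    smul_eq_mul]
  refine ((hdet hg).inv fun p hp => ?_).mul (hdet fun k l => ?_)
  · exact ((Matrix.isUnit_iff_isUnit_det _).1 (hinv p hp)).ne_zero
  · by_cases h : k = j
    · subst h
      simp
    · simpa [Matrix.updateRow_apply, h] using hg k l

/-- The derivative `v g` of the metric at `p` in the direction `v`. -/
noncomputable def metricDeriv (N : ℕ) (g : (Fin N → ℂ) → Matrix (Fin N) (Fin N) ℂ)
    (p v : Fin N → ℂ) : Matrix (Fin N) (Fin N) ℂ :=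
  Matrix.of fun i j => fderiv ℂ (fun q => g q i j) p v

/-- The Christoffel symbols of the first kind at `p`, as a trilinear form. -/
noncomputable def christoffelForm (N : ℕ) (g : (Fin N → ℂ) → Matrix (Fin N) (Fin N) ℂ)
    (p v w x : Fin N → ℂ) : ℂ :=
  (w ⬝ᵥ (metricDeriv N g p v *ᵥ x) + v ⬝ᵥ (metricDeriv N g p w *ᵥ x)
    - v ⬝ᵥ (metricDeriv N g p x *ᵥ w)) / 2

/-- The Christoffel symbols of the second kind at `p`, as a bilinear map. -/
noncomputable def christoffel (N : ℕ) (g : (Fin N → ℂ) → Matrix (Fin N) (Fin N) ℂ)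
    (p v w : Fin N → ℂ) : Fin N → ℂ :=
  (g p)⁻¹ *ᵥ fun i => christoffelForm N g p v w (Pi.single i 1)

/-- The Levi-Civita connexion `D_V W = dW(V) + Γ(V, W)`. -/
noncomputable def leviCivita (N : ℕ) (g : (Fin N → ℂ) → Matrix (Fin N) (Fin N) ℂ)
    (V W : (Fin N → ℂ) → (Fin N → ℂ)) (p : Fin N → ℂ) : Fin N → ℂ :=
  fderiv ℂ W p (V p) + christoffel N g p (V p) (W p)

section Algebra

variable {N : ℕ} {g : (Fin N → ℂ) → Matrix (Fin N) (Fin N) ℂ}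

theorem metricDeriv_add (p v w : Fin N → ℂ) :
    metricDeriv N g p (v + w) = metricDeriv N g p v + metricDeriv N g p w := by
  ext i j
  simp [metricDeriv]

theorem metricDeriv_smul (p : Fin N → ℂ) (a : ℂ) (v : Fin N → ℂ) :
    metricDeriv N g p (a • v) = a • metricDeriv N g p v := by
  ext i j
  simp [metricDeriv]

theorem metricDeriv_isSymm {U : Set (Fin N → ℂ)} (hU : IsOpen U)
    (hsymm : ∀ p ∈ U, (g p).IsSymm) {p : Fin N → ℂ} (hp : p ∈ U) (v : Fin N → ℂ) :
    (metricDeriv N g p v).IsSymm := by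
  ext i j
  have h : (fun q => g q j i) =ᶠ[nhds p] fun q => g q i j := by
    filter_upwards [hU.mem_nhds hp] with q hq using (hsymm q hq).apply i j
  simp only [metricDeriv, Matrix.transpose_apply, Matrix.of_apply, h.fderiv_eq]

theorem dotProduct_mulVec_comm_of_isSymm {A : Matrix (Fin N) (Fin N) ℂ} (hA : A.IsSymm)
    (v w : Fin N → ℂ) : v ⬝ᵥ (A *ᵥ w) = w ⬝ᵥ (A *ᵥ v) := by
  rw [Matrix.dotProduct_mulVec, ← Matrix.mulVec_transpose, hA.eq, dotProduct_comm]

theorem christoffelForm_comm {U : Set (Fin N → ℂ)} (hU : IsOpen U)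
    (hsymm : ∀ p ∈ U, (g p).IsSymm) {p : Fin N → ℂ} (hp : p ∈ U) (v w x : Fin N → ℂ) :
    christoffelForm N g p v w x = christoffelForm N g p w v x := by
  simp only [christoffelForm]
  rw [dotProduct_mulVec_comm_of_isSymm (metricDeriv_isSymm hU hsymm hp x) v w]
  ring

theorem christoffel_comm {U : Set (Fin N → ℂ)} (hU : IsOpen U)
    (hsymm : ∀ p ∈ U, (g p).IsSymm) {p : Fin N → ℂ} (hp : p ∈ U) (v w : Fin N → ℂ) :
    christoffel N g p v w = christoffel N g p w v := by
  simp only [christoffel, christoffelForm_comm hU hsymm hp v w]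

/-- `christoffelForm` is linear in its last argument. -/
theorem christoffelForm_eq_dotProduct (p v w x : Fin N → ℂ) :
    christoffelForm N g p v w x
      = (fun i => christoffelForm N g p v w (Pi.single i 1)) ⬝ᵥ x := by
  let L : (Fin N → ℂ) →ₗ[ℂ] ℂ :=
    { toFun := christoffelForm N g p v w
      map_add' := fun y z => by
        simp only [christoffelForm, metricDeriv_add, Matrix.add_mulVec, Matrix.mulVec_add,
          dotProduct_add]
        ring
      map_smul' := fun a y => by
        simp only [christoffelForm, metricDeriv_smul, Matrix.smul_mulVec, Matrix.mulVec_smul,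
          dotProduct_smul, smul_eq_mul, RingHom.id_apply]
        ring }
  change L x = _
  rw [LinearMap.pi_apply_eq_sum_univ L x]
  simp only [dotProduct, smul_eq_mul, mul_comm (x _)]
  refine Finset.sum_congr rfl fun i _ => ?_
  have hi : (fun j => if i = j then (1 : ℂ) else 0) = Pi.single i 1 := by
    ext j
    simp [Pi.single_apply, eq_comm]
  rw [hi]
  rfl

theorem christoffel_linear_left (p : Fin N → ℂ) (a b : ℂ) (v₁ v₂ w : Fin N → ℂ) :
    christoffel N g p (a • v₁ + b • v₂) w
      = a • christoffel N g p v₁ w + b • christoffel N g p v₂ w := by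
  simp only [christoffel]
  rw [← Matrix.mulVec_smul, ← Matrix.mulVec_smul, ← Matrix.mulVec_add]
  congr 1
  ext i
  simp only [christoffelForm, metricDeriv_add, metricDeriv_smul, Matrix.add_mulVec,
    Matrix.smul_mulVec, dotProduct_add, dotProduct_smul, add_dotProduct, smul_dotProduct,
    smul_eq_mul, Pi.add_apply, Pi.smul_apply]
  ring

theorem christoffel_linear_right (p : Fin N → ℂ) (a b : ℂ) (v w₁ w₂ : Fin N → ℂ) :
    christoffel N g p v (a • w₁ + b • w₂)
      = a • christoffel N g p v w₁ + b • christoffel N g p v w₂ := by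
  simp only [christoffel]
  rw [← Matrix.mulVec_smul, ← Matrix.mulVec_smul, ← Matrix.mulVec_add]
  congr 1
  ext i
  simp only [christoffelForm, metricDeriv_add, metricDeriv_smul, Matrix.add_mulVec,
    Matrix.smul_mulVec, Matrix.mulVec_add, Matrix.mulVec_smul, dotProduct_add, dotProduct_smul,
    add_dotProduct, smul_dotProduct, smul_eq_mul, Pi.add_apply, Pi.smul_apply]
  ring

theorem christoffel_smul_right (p : Fin N → ℂ) (a : ℂ) (v w : Fin N → ℂ) :
    christoffel N g p v (a • w) = a • christoffel N g p v w := by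
  simpa using christoffel_linear_right (g := g) p a 0 v w 0

theorem christoffel_dotProduct_mulVec {p : Fin N → ℂ} (hsymm : (g p).IsSymm)
    (hinv : IsUnit (g p)) (v w x : Fin N → ℂ) :
    christoffel N g p v w ⬝ᵥ (g p *ᵥ x) = christoffelForm N g p v w x := by
  rw [dotProduct_mulVec_comm_of_isSymm hsymm, christoffel, Matrix.mulVec_mulVec,
    Matrix.mul_nonsing_inv _ ((Matrix.isUnit_iff_isUnit_det _).1 hinv), Matrix.one_mulVec,
    dotProduct_comm, ← christoffelForm_eq_dotProduct]

theorem pairing_comm {p : Fin N → ℂ} (hsymm : (g p).IsSymm) (V W : (Fin N → ℂ) → (Fin N → ℂ)) :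
    pairing N g V W p = pairing N g W V p :=
  dotProduct_mulVec_comm_of_isSymm hsymm _ _

/-- Product rule for the derivative of the metric pairing of two vector fields. -/
theorem act_pairing {p : Fin N → ℂ} (hg : ∀ i j, DifferentiableAt ℂ (fun q => g q i j) p)
    (X : (Fin N → ℂ) → (Fin N → ℂ)) {V W : (Fin N → ℂ) → (Fin N → ℂ)}
    (hV : DifferentiableAt ℂ V p) (hW : DifferentiableAt ℂ W p) :
    act N X (pairing N g V W) p
      = fderiv ℂ V p (X p) ⬝ᵥ (g p *ᵥ W p) + V p ⬝ᵥ (g p *ᵥ fderiv ℂ W p (X p))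
        + V p ⬝ᵥ (metricDeriv N g p (X p) *ᵥ W p) := by
  have hV' := hasFDerivAt_pi'.1 hV.hasFDerivAt
  have hW' := hasFDerivAt_pi'.1 hW.hasFDerivAt
  have h : HasFDerivAt (fun q => ∑ i, V q i * ∑ j, g q i j * W q j) _ p :=
    HasFDerivAt.fun_sum (u := Finset.univ) fun i _ =>
      (hV' i).mul (HasFDerivAt.fun_sum (u := Finset.univ) fun j _ =>
        (hg i j).hasFDerivAt.mul (hW' j))
  have hpair : pairing N g V W = fun q => ∑ i, V q i * ∑ j, g q i j * W q j := rfl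
  rw [act, hpair, h.fderiv]
  simp only [dotProduct, Matrix.mulVec, metricDeriv, Matrix.of_apply,
    _root_.sum_apply, _root_.add_apply, _root_.smul_apply,
    ContinuousLinearMap.comp_apply, ContinuousLinearMap.proj_apply, smul_eq_mul]
  rw [← Finset.sum_add_distrib, ← Finset.sum_add_distrib]
  refine Finset.sum_congr rfl fun i _ => ?_
  rw [Finset.sum_add_distrib]
  simp only [mul_comm (W p _)]
  ring

end Algebra

/-- A Levi-Civita connexion satisfies Koszul's formula. -/
theorem IsLeviCivita.koszul {N : ℕ} {U : Set (Fin N → ℂ)}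
    {g : (Fin N → ℂ) → Matrix (Fin N) (Fin N) ℂ} (hsymm : ∀ p ∈ U, (g p).IsSymm)
    {D : ((Fin N → ℂ) → (Fin N → ℂ)) → ((Fin N → ℂ) → (Fin N → ℂ)) →
      ((Fin N → ℂ) → (Fin N → ℂ))} (hD : IsLeviCivita N U g D)
    {V W X : (Fin N → ℂ) → (Fin N → ℂ)} (hV : HolVF N U V) (hW : HolVF N U W)
    (hX : HolVF N U X) {p : Fin N → ℂ} (hp : p ∈ U) :
    2 * pairing N g (D V W) X p
      = act N V (pairing N g W X) p + act N W (pairing N g X V) p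
        - act N X (pairing N g V W) p
        - pairing N g V (bracket N W X) p
        + pairing N g W (bracket N X V) p
        + pairing N g X (bracket N V W) p := by
  obtain ⟨-, -, -, -, htors, hmetric⟩ := hD
  have hsub : ∀ A B C E : (Fin N → ℂ) → (Fin N → ℂ), B p = C p - E p →
      pairing N g A B p = pairing N g A C p - pairing N g A E p := by
    intro A B C E h
    simp only [pairing, h, Matrix.mulVec_sub, dotProduct_sub]
  rw [hmetric V W X hV hW hX p hp, hmetric W X V hW hX hV p hp, hmetric X V W hX hV hW p hp,
    hsub V _ _ _ (htors W X hW hX p hp), hsub W _ _ _ (htors X V hX hV p hp),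
    hsub X _ _ _ (htors V W hV hW p hp)]
  have hc := pairing_comm (hsymm p hp)
  rw [hc (D V W) X, hc (D W X) V, hc (D X V) W]
  ring

/-- Two Levi-Civita connexions of the same nondegenerate metric agree. -/
theorem IsLeviCivita.unique {N : ℕ} {U : Set (Fin N → ℂ)}
    {g : (Fin N → ℂ) → Matrix (Fin N) (Fin N) ℂ} (hsymm : ∀ p ∈ U, (g p).IsSymm)
    (hinv : ∀ p ∈ U, IsUnit (g p))
    {D D' : ((Fin N → ℂ) → (Fin N → ℂ)) → ((Fin N → ℂ) → (Fin N → ℂ)) →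
      ((Fin N → ℂ) → (Fin N → ℂ))} (hD : IsLeviCivita N U g D) (hD' : IsLeviCivita N U g D')
    {V W : (Fin N → ℂ) → (Fin N → ℂ)} (hV : HolVF N U V) (hW : HolVF N U W)
    {p : Fin N → ℂ} (hp : p ∈ U) : D V W p = D' V W p := by
  have h : ∀ x, (D V W p) ⬝ᵥ (g p *ᵥ x) = (D' V W p) ⬝ᵥ (g p *ᵥ x) := fun x => by
    have hx : HolVF N U fun _ => x := differentiableOn_const x
    exact mul_left_cancel₀ (two_ne_zero (α := ℂ))
      ((hD.koszul hsymm hV hW hx hp).trans (hD'.koszul hsymm hV hW hx hp).symm)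
  refine dotProduct_eq _ _ fun y => ?_
  have hy : g p *ᵥ ((g p)⁻¹ *ᵥ y) = y := by
    rw [Matrix.mulVec_mulVec, Matrix.mul_nonsing_inv _
      ((Matrix.isUnit_iff_isUnit_det _).1 (hinv p hp)), Matrix.one_mulVec]
  simpa only [hy] using h ((g p)⁻¹ *ᵥ y)

/-- The derivative of a holomorphic map along a holomorphic vector field is holomorphic. -/
theorem differentiableOn_fderiv_apply {N : ℕ} {F : Type*} [NormedAddCommGroup F]
    [NormedSpace ℂ F] [FiniteDimensional ℂ F] {U : Set (Fin N → ℂ)} (hU : IsOpen U)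
    {f : (Fin N → ℂ) → F} (hf : DifferentiableOn ℂ f U) {V : (Fin N → ℂ) → (Fin N → ℂ)}
    (hV : DifferentiableOn ℂ V U) : DifferentiableOn ℂ (fun p => fderiv ℂ f p (V p)) U := by
  have h : (fun p => fderiv ℂ f p (V p))
      = fun p => ∑ i, V p i • fderiv ℂ f p (fun j => if i = j then 1 else 0) := by
    ext1 p
    exact LinearMap.pi_apply_eq_sum_univ (fderiv ℂ f p).toLinearMap (V p)
  rw [h]
  exact DifferentiableOn.fun_sum fun i _ => (differentiableOn_pi.1 hV i).smul
    (differentiableOn_fderiv_apply_const hf hU _)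

theorem differentiableOn_leviCivita {N : ℕ} {U : Set (Fin N → ℂ)} (hU : IsOpen U)
    {g : (Fin N → ℂ) → Matrix (Fin N) (Fin N) ℂ}
    (hg : ∀ i j, DifferentiableOn ℂ (fun p => g p i j) U) (hinv : ∀ p ∈ U, IsUnit (g p))
    {V W : (Fin N → ℂ) → (Fin N → ℂ)} (hV : DifferentiableOn ℂ V U)
    (hW : DifferentiableOn ℂ W U) : DifferentiableOn ℂ (leviCivita N g V W) U := by
  have hmul : ∀ {A X B : (Fin N → ℂ) → (Fin N → ℂ)},
      DifferentiableOn ℂ A U → DifferentiableOn ℂ X U → DifferentiableOn ℂ B U →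
      DifferentiableOn ℂ (fun p => A p ⬝ᵥ (metricDeriv N g p (X p) *ᵥ B p)) U := by
    intro A X B hA hX hB
    simp only [dotProduct, Matrix.mulVec, metricDeriv, Matrix.of_apply]
    exact DifferentiableOn.fun_sum fun i _ => (differentiableOn_pi.1 hA i).mul <|
      DifferentiableOn.fun_sum fun j _ =>
        (differentiableOn_fderiv_apply hU (hg i j) hX).mul (differentiableOn_pi.1 hB j)
  refine (differentiableOn_fderiv_apply hU hW hV).add (differentiableOn_pi.2 fun i => ?_)
  simp only [christoffel, Matrix.mulVec, dotProduct]
  refine DifferentiableOn.fun_sum fun j _ =>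
    (differentiableOn_matrix_inv_apply hg hinv i j).mul ?_
  have hconst : DifferentiableOn ℂ (fun _ : Fin N → ℂ => (Pi.single j 1 : Fin N → ℂ)) U :=
    differentiableOn_const _
  simp only [christoffelForm, div_eq_mul_inv]
  exact (((hmul hW hV hconst).add (hmul hV hW hconst)).sub (hmul hV hconst hW)).mul_const _

theorem isLeviCivita_leviCivita {N : ℕ} {U : Set (Fin N → ℂ)} (hU : IsOpen U)
    {g : (Fin N → ℂ) → Matrix (Fin N) (Fin N) ℂ}
    (hg : ∀ i j, DifferentiableOn ℂ (fun p => g p i j) U) (hsymm : ∀ p ∈ U, (g p).IsSymm)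
    (hinv : ∀ p ∈ U, IsUnit (g p)) : IsLeviCivita N U g (leviCivita N g) := by
  refine ⟨fun V W hV hW => differentiableOn_leviCivita hU hg hinv hV hW, ?_, ?_, ?_, ?_, ?_⟩
  · intro f₁ f₂ V₁ V₂ W _ _ _ _ _ p _
    simp only [leviCivita, christoffel_linear_left, map_add, map_smul, smul_add]
    abel
  · intro a b V W₁ W₂ _ hW₁ hW₂ p hp
    have h₁ := hW₁.differentiableAt (hU.mem_nhds hp)
    have h₂ := hW₂.differentiableAt (hU.mem_nhds hp)
    have h := ((h₁.hasFDerivAt.const_smul a).add (h₂.hasFDerivAt.const_smul b)).fderiv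
    have h' : fderiv ℂ (fun q => a • W₁ q + b • W₂ q) p
        = a • fderiv ℂ W₁ p + b • fderiv ℂ W₂ p := h
    simp only [leviCivita, christoffel_linear_right, h', _root_.add_apply,
      _root_.smul_apply, smul_add]
    abel
  · intro f V W hf _ hW p hp
    have h := ((hf.differentiableAt (hU.mem_nhds hp)).hasFDerivAt.smul
      (hW.differentiableAt (hU.mem_nhds hp)).hasFDerivAt).fderiv
    have h' : fderiv ℂ (fun q => f q • W q) p
        = f p • fderiv ℂ W p + (fderiv ℂ f p).smulRight (W p) := h
    simp only [leviCivita, christoffel_smul_right, h', _root_.add_apply,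
      _root_.smul_apply, ContinuousLinearMap.smulRight_apply, smul_add, act]
    abel
  · intro V W _ _ p hp
    simp only [bracket, leviCivita, christoffel_comm hU hsymm hp (V p) (W p)]
    abel
  · intro X V W _ hV hW p hp
    have hp' := hU.mem_nhds hp
    rw [act_pairing (fun i j => (hg i j).differentiableAt hp') X (hV.differentiableAt hp')
      (hW.differentiableAt hp')]
    simp only [pairing, leviCivita, add_dotProduct, Matrix.mulVec_add, dotProduct_add]
    rw [christoffel_dotProduct_mulVec (hsymm p hp) (hinv p hp),
      dotProduct_mulVec_comm_of_isSymm (hsymm p hp) (V p) (christoffel N g p (X p) (W p)),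
      christoffel_dotProduct_mulVec (hsymm p hp) (hinv p hp)]
    have hs := fun v => dotProduct_mulVec_comm_of_isSymm (metricDeriv_isSymm hU hsymm hp v)
    simp only [christoffelForm]
    rw [hs (X p) (W p) (V p), hs (V p) (X p) (W p), hs (W p) (X p) (V p)]
    ring

/-- Existence and uniqueness of the holomorphic Levi-Civita connexion of a
nondegenerate holomorphic metric, in a coordinate chart, together with the
Koszul formula characterizing it. -/
theorem leviCivita_exists_unique
    (N : ℕ) (hN : 1 ≤ N) (U : Set (Fin N → ℂ)) (hU : IsOpen U)
    (g : (Fin N → ℂ) → Matrix (Fin N) (Fin N) ℂ)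
    (hg : ∀ i j, DifferentiableOn ℂ (fun p => g p i j) U)
    (hsymm : ∀ p ∈ U, (g p).IsSymm)
    (hinv : ∀ p ∈ U, IsUnit (g p)) :
    ∃ D, IsLeviCivita N U g D ∧
      (∀ V W X, HolVF N U V → HolVF N U W → HolVF N U X →
        ∀ p ∈ U,
          2 * pairing N g (D V W) X p
            = act N V (pairing N g W X) p + act N W (pairing N g X V) p
              - act N X (pairing N g V W) p
              - pairing N g V (bracket N W X) p
              + pairing N g W (bracket N X V) p
              + pairing N g X (bracket N V W) p) ∧
      ∀ D', IsLeviCivita N U g D' →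
        ∀ V W, HolVF N U V → HolVF N U W → ∀ p ∈ U, D V W p = D' V W p := by
  have hD := isLeviCivita_leviCivita hU hg hsymm hinv
  exact ⟨leviCivita N g, hD, fun V W X hV hW hX p hp => hD.koszul hsymm hV hW hX hp,
    fun D' hD' V W hV hW p hp => hD.unique hsymm hinv hD' hV hW hp⟩

end LeviCivitaChart
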